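/- arXiv:2605.09209 — 8 statements merged into one kernel-verified Lean document; each statement's English description precedes it below -/
import Mathlib

section
/- C¹ envelope theorem under uniqueness of minimizers (coordinate form of the theorem that unique optimistic selection implies continuous differentiability of the hyper-objective): Let V ⊆ ℝ^m be open, let U ⊆ ℝ^ℓ be a nonempty compact set, and let φ : ℝ^m × ℝ^ℓ → ℝ be continuous on V × U. Assume that for every u ∈ U the map θ ↦ φ(θ,u) is differentiable on V, and that the partial gradient (θ,u) ↦ ∇_θ φ(θ,u) is continuous on V × U. Define the value function F(θ) := min_{u∈U} φ(θ,u) for θ ∈ V. If for every θ ∈ V the set {u ∈ U : φ(θ,u) = F(θ)} is a singleton {u*(θ)}, then: (i) the map u* : V → U is continuous; (ii) F is differentiable at every θ ∈ V with ∇F(θ) = ∇_θ φ(θ, u*(θ)); (iii) ∇F is continuous on V, so F is continuously differentiable on V. -/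
open Set

/-- **C¹ envelope theorem under uniqueness of minimizers.**
If `U` is nonempty compact, `φ` is continuous on `V ×ˢ U`, `θ ↦ φ θ u` is differentiable on the
open set `V` for each `u ∈ U`, the partial derivative in `θ` is continuous on `V ×ˢ U`,
`F θ = min_{u ∈ U} φ θ u`, and for every `θ ∈ V` the set of minimizers of `φ θ ·` over `U` is
the singleton `{ustar θ}`, then `ustar` is continuous on `V`, `F` is differentiable at every
`θ ∈ V` with derivative `∇_θ φ (θ, ustar θ)`, and the derivative of `F` is continuous on `V`. -/
theorem c1_envelope_unique_minimizers
    {m l : ℕ}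
    (V : Set (EuclideanSpace ℝ (Fin m))) (U : Set (EuclideanSpace ℝ (Fin l)))
    (φ : EuclideanSpace ℝ (Fin m) → EuclideanSpace ℝ (Fin l) → ℝ)
    (hV : IsOpen V)
    (hUcpt : IsCompact U) (hUne : U.Nonempty)
    (hφcont : ContinuousOn
      (fun p : EuclideanSpace ℝ (Fin m) × EuclideanSpace ℝ (Fin l) => φ p.1 p.2) (V ×ˢ U))
    (hφdiff : ∀ u ∈ U, DifferentiableOn ℝ (fun θ => φ θ u) V)
    (hgradcont : ContinuousOn
      (fun p : EuclideanSpace ℝ (Fin m) × EuclideanSpace ℝ (Fin l) =>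
        fderiv ℝ (fun θ => φ θ p.2) p.1)
      (V ×ˢ U))
    (F : EuclideanSpace ℝ (Fin m) → ℝ)
    (hF : ∀ θ, F θ = sInf ((fun u => φ θ u) '' U))
    (ustar : EuclideanSpace ℝ (Fin m) → EuclideanSpace ℝ (Fin l))
    (huniq : ∀ θ ∈ V, {u | u ∈ U ∧ φ θ u = F θ} = {ustar θ}) :
    ContinuousOn ustar V ∧
    (∀ θ ∈ V, HasFDerivAt F (fderiv ℝ (fun θ' => φ θ' (ustar θ)) θ) θ) ∧
    ContinuousOn (fun θ => fderiv ℝ F θ) V := by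
  have hmem : ∀ θ ∈ V, ustar θ ∈ U ∧ φ θ (ustar θ) = F θ := by
    intro θ hθ
    have h : ustar θ ∈ {u | u ∈ U ∧ φ θ u = F θ} := by
      rw [huniq θ hθ]; rfl
    exact h
  have hle : ∀ θ ∈ V, ∀ u ∈ U, F θ ≤ φ θ u := by
    intro θ hθ u hu
    have hc : ContinuousOn (fun u => φ θ u) U :=
      hφcont.comp (f := fun u => (θ, u)) (by fun_prop) (fun u hu => ⟨hθ, hu⟩)
    rw [hF θ]
    exact csInf_le (hUcpt.image_of_continuousOn hc).bddBelow ⟨u, hu, rfl⟩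
  have h1 : ContinuousOn ustar V := by
    intro θ₀ hθ₀
    refine hUcpt.tendsto_nhds_of_unique_mapClusterPt (l := nhdsWithin θ₀ V) ?_ ?_
    · filter_upwards [self_mem_nhdsWithin] with θ hθ using (hmem θ hθ).1
    · intro y hy hcl
      obtain ⟨𝒰, h𝒰, hty⟩ := mapClusterPt_iff_ultrafilter.1 hcl
      have hVm : ∀ᶠ θ in (𝒰 : Filter _), θ ∈ V := h𝒰 self_mem_nhdsWithin
      have hid : Filter.Tendsto (fun θ => θ) (𝒰 : Filter _) (nhds θ₀) :=
        h𝒰.trans nhdsWithin_le_nhds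
      have key : ∀ (g : EuclideanSpace ℝ (Fin m) → EuclideanSpace ℝ (Fin l)) (z),
          z ∈ U → (∀ θ ∈ V, g θ ∈ U) → Filter.Tendsto g (𝒰 : Filter _) (nhds z) →
          Filter.Tendsto (fun θ => φ θ (g θ)) (𝒰 : Filter _) (nhds (φ θ₀ z)) := by
        intro g z hz hg hgt
        have hc := hφcont (θ₀, z) ⟨hθ₀, hz⟩
        refine Filter.Tendsto.comp (g := fun p : EuclideanSpace ℝ (Fin m) ×
          EuclideanSpace ℝ (Fin l) => φ p.1 p.2) (f := fun θ => (θ, g θ)) hc ?_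
        refine tendsto_nhdsWithin_iff.2 ⟨hid.prodMk_nhds hgt, ?_⟩
        filter_upwards [hVm] with θ hθ using ⟨hθ, hg θ hθ⟩
      have hlim : φ θ₀ y ≤ φ θ₀ (ustar θ₀) := by
        refine le_of_tendsto_of_tendsto
          (key ustar y hy (fun θ hθ => (hmem θ hθ).1) hty)
          (key (fun _ => ustar θ₀) (ustar θ₀) (hmem θ₀ hθ₀).1
            (fun θ hθ => (hmem θ₀ hθ₀).1) tendsto_const_nhds) ?_
        filter_upwards [hVm] with θ hθ
        rw [(hmem θ hθ).2]
        exact hle θ hθ _ (hmem θ₀ hθ₀).1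
      have hin : y ∈ {u | u ∈ U ∧ φ θ₀ u = F θ₀} :=
        ⟨hy, le_antisymm (hlim.trans_eq (hmem θ₀ hθ₀).2) (hle θ₀ hθ₀ y hy)⟩
      rw [huniq θ₀ hθ₀] at hin
      exact hin
  have h2 : ∀ θ ∈ V, HasFDerivAt F (fderiv ℝ (fun θ' => φ θ' (ustar θ)) θ) θ := by
    intro θ₀ hθ₀
    rw [hasFDerivAt_iff_isLittleO, Asymptotics.isLittleO_iff]
    intro ε hε
    obtain ⟨δ, hδ, hD⟩ := Metric.continuousWithinAt_iff.1
      (hgradcont (θ₀, ustar θ₀) ⟨hθ₀, (hmem θ₀ hθ₀).1⟩) ε hε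
    obtain ⟨r, hr, hrV⟩ := Metric.isOpen_iff.1 hV θ₀ hθ₀
    set D := fderiv ℝ (fun θ' => φ θ' (ustar θ₀)) θ₀ with hDdef
    have key : ∀ u ∈ U, dist u (ustar θ₀) < δ → ∀ θ ∈ Metric.ball θ₀ (min δ r),
        |φ θ u - φ θ₀ u - D (θ - θ₀)| ≤ ε * ‖θ - θ₀‖ := by
      intro u hu hud θ hθ
      have hsub : ∀ x ∈ Metric.ball θ₀ (min δ r), x ∈ V := fun x hx =>
        hrV (Metric.ball_subset_ball (min_le_right _ _) hx)
      refine (convex_ball θ₀ (min δ r)).norm_image_sub_le_of_norm_hasFDerivWithin_le'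
        (f := fun θ => φ θ u) (f' := fun x => fderiv ℝ (fun θ => φ θ u) x) ?_ ?_
        (Metric.mem_ball_self (lt_min hδ hr)) hθ
      · intro x hx
        exact ((hφdiff u hu).differentiableAt
          (hV.mem_nhds (hsub x hx))).hasFDerivAt.hasFDerivWithinAt
      · intro x hx
        have h := hD (x := (x, u)) ⟨hsub x hx, hu⟩ (by
          rw [Prod.dist_eq]
          exact max_lt (lt_of_lt_of_le hx (min_le_left _ _)) hud)
        rw [dist_eq_norm] at h
        exact h.le
    have hcont : ContinuousAt ustar θ₀ := h1.continuousAt (hV.mem_nhds hθ₀)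
    filter_upwards [hcont (Metric.ball_mem_nhds _ hδ),
      Metric.ball_mem_nhds θ₀ (lt_min hδ hr)] with θ hu hθ
    have hθV : θ ∈ V := hrV (Metric.ball_subset_ball (min_le_right _ _) hθ)
    have k1 := abs_le.1 (key (ustar θ₀) (hmem θ₀ hθ₀).1 (by simpa using hδ) θ hθ)
    have k2 := abs_le.1 (key (ustar θ) (hmem θ hθV).1 hu θ hθ)
    have a1 := (hmem θ₀ hθ₀).2
    have a2 := (hmem θ hθV).2
    have a3 := hle θ hθV _ (hmem θ₀ hθ₀).1
    have a4 := hle θ₀ hθ₀ _ (hmem θ hθV).1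
    rw [Real.norm_eq_abs, abs_le]
    constructor
    · linarith [k2.1]
    · linarith [k1.2]
  refine ⟨h1, h2, ?_⟩
  refine ContinuousOn.congr (f := fun θ => fderiv ℝ (fun θ' => φ θ' (ustar θ)) θ) ?_
    (fun θ hθ => (h2 θ hθ).fderiv)
  exact hgradcont.comp (f := fun θ => (θ, ustar θ)) (continuousOn_id.prodMk h1)
    (fun θ hθ => ⟨hθ, (hmem θ hθ).1⟩)
end

section
/- Convergence of inexact projected gradient descent to near-stationarity: Let Θ ⊆ ℝ^m be a nonempty compact convex set and let P : ℝ^m → ℝ^m denote the metric projection onto Θ. Let F : ℝ^m → ℝ be differentiable at every point of Θ with gradient ∇F that is L-Lipschitz on Θ for some L > 0, and set F⋆ := inf_{θ∈Θ} F(θ). Fix a stepsize α with 0 < α ≤ 1/L. Let θ₀ ∈ Θ, let (ĥ_t)_{t≥0} be an arbitrary sequence in ℝ^m, and define θ_{t+1} := P(θ_t − α ĥ_t). Set e_t := ĥ_t − ∇F(θ_t) and the gradient mapping 𝒢_t := α^{-1} (θ_t − P(θ_t − α ∇F(θ_t))). Then for every integer T ≥ 1: (1/T) ∑_{t=0}^{T−1}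 ‖𝒢_t‖² ≤ 8 (F(θ₀) − F⋆) / (α T) + (10/T) ∑_{t=0}^{T−1} ‖e_t‖². -/
open Finset


lemma aux_var {E : Type*} [NormedAddCommGroup E] [InnerProductSpace ℝ E]
    {Θ : Set E} (hconv : Convex ℝ Θ) {x p : E} (hp : p ∈ Θ)
    (h : ∀ y ∈ Θ, ‖x - p‖ ≤ ‖x - y‖) {y : E} (hy : y ∈ Θ) :
    inner ℝ (x - p) (y - p) ≤ 0 := by
  refine (norm_eq_iInf_iff_real_inner_le_zero hconv hp).1 ?_ y hy
  haveI : Nonempty Θ := ⟨⟨p, hp⟩⟩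
  apply le_antisymm
  · exact le_ciInf fun w => h w w.2
  · exact ciInf_le (f := fun w : Θ => ‖x - w‖)
      ⟨0, by rintro _ ⟨w, rfl⟩; exact norm_nonneg _⟩ ⟨p, hp⟩

lemma aux_nonexp {E : Type*} [NormedAddCommGroup E] [InnerProductSpace ℝ E]
    {Θ : Set E} (hconv : Convex ℝ Θ) {x y p q : E} (hp : p ∈ Θ) (hq : q ∈ Θ)
    (h : ∀ z ∈ Θ, ‖x - p‖ ≤ ‖x - z‖) (h' : ∀ z ∈ Θ, ‖y - q‖ ≤ ‖y - z‖) :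
    ‖p - q‖ ≤ ‖x - y‖ := by
  have h1 := aux_var hconv hp h hq
  have h2 := aux_var hconv hq h' hp
  have h3 : inner ℝ (x - y) (p - q) =
      ‖p - q‖ ^ 2 - inner ℝ (x - p) (q - p) - inner ℝ (y - q) (p - q) := by
    rw [← real_inner_self_eq_norm_sq]
    simp only [inner_sub_left, inner_sub_right]
    ring
  have h4 := real_inner_le_norm (x - y) (p - q)
  by_contra hc
  push Not at hc
  nlinarith [norm_nonneg (x - y)]

lemma aux_descent {E : Type*} [NormedAddCommGroup E] [InnerProductSpace ℝ E] [CompleteSpace E]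
    {Θ : Set E} (hconv : Convex ℝ Θ) {F : E → ℝ}
    (hF : ∀ θ ∈ Θ, DifferentiableAt ℝ F θ) {L : ℝ}
    (hlip : ∀ θ ∈ Θ, ∀ θ' ∈ Θ, ‖gradient F θ - gradient F θ'‖ ≤ L * ‖θ - θ'‖)
    {x y : E} (hx : x ∈ Θ) (hy : y ∈ Θ) :
    F y ≤ F x + inner ℝ (gradient F x) (y - x) + L / 2 * ‖y - x‖ ^ 2 := by
  have hmem : ∀ s ∈ Set.Icc (0 : ℝ) 1, x + s • (y - x) ∈ Θ := fun s hs =>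
    hconv.add_smul_sub_mem hx hy hs
  have hd : ∀ s ∈ Set.Icc (0 : ℝ) 1, HasDerivAt
      (fun s : ℝ => F (x + s • (y - x)) - s * inner ℝ (gradient F x) (y - x)
        - L / 2 * ‖y - x‖ ^ 2 * s ^ 2)
      (inner ℝ (gradient F (x + s • (y - x))) (y - x) - inner ℝ (gradient F x) (y - x)
        - L * ‖y - x‖ ^ 2 * s) s := by
    intro s hs
    have h1 := (hF _ (hmem s hs)).hasGradientAt.hasFDerivAt
    have h2 : HasDerivAt (fun s : ℝ => x + s • (y - x)) (y - x) s := by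
      simpa using ((hasDerivAt_id s).smul_const (y - x)).const_add x
    have h3 := h1.comp_hasDerivAt s h2
    have h4 := (hasDerivAt_id s).mul_const (inner ℝ (gradient F x) (y - x))
    have h5 := ((hasDerivAt_id s).pow 2).const_mul (L / 2 * ‖y - x‖ ^ 2)
    refine ((h3.sub h4).sub h5).congr_deriv ?_
    simp
    ring
  have hanti := antitoneOn_of_deriv_nonpos (convex_Icc (0 : ℝ) 1)
    (fun s hs => (hd s hs).continuousAt.continuousWithinAt)
    (fun s hs => (hd s (interior_subset hs)).differentiableAt.differentiableWithinAt)
    (by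
      intro s hs
      have hs' := interior_subset hs
      rw [(hd s hs').deriv, ← inner_sub_left]
      have h1 := real_inner_le_norm (gradient F (x + s • (y - x)) - gradient F x) (y - x)
      have h2 := hlip _ (hmem s hs') _ hx
      rw [add_sub_cancel_left, norm_smul, Real.norm_of_nonneg hs'.1] at h2
      nlinarith [mul_le_mul_of_nonneg_right h2 (norm_nonneg (y - x))])
  have := hanti (Set.left_mem_Icc.2 zero_le_one) (Set.right_mem_Icc.2 zero_le_one) zero_le_one
  simp only [one_smul, zero_smul, add_zero, add_sub_cancel, one_mul, zero_mul] at this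
  linarith

/-- **Convergence of inexact projected gradient descent to near-stationarity.**
For a nonempty compact convex `Θ ⊆ ℝ^m` with metric projection `P`, a function `F`
differentiable at every point of `Θ` whose gradient is `L`-Lipschitz on `Θ`,
`Fstar = inf_Θ F`, a stepsize `0 < α ≤ 1/L`, iterates `θ (t+1) = P (θ t - α • hhat t)`
started in `Θ`, hyper-gradient errors `e t = hhat t - ∇F (θ t)` and gradient mapping
`G t = α⁻¹ • (θ t - P (θ t - α • ∇F (θ t)))`, the average squared gradient mapping
is bounded as stated, for every `T ≥ 1`. -/
theorem inexact_projected_gradient_descent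
    {m : ℕ}
    (Θ : Set (EuclideanSpace ℝ (Fin m)))
    (hΘne : Θ.Nonempty) (hΘcpt : IsCompact Θ) (hΘconv : Convex ℝ Θ)
    (P : EuclideanSpace ℝ (Fin m) → EuclideanSpace ℝ (Fin m))
    (hP : ∀ x, P x ∈ Θ ∧ ∀ y ∈ Θ, ‖x - P x‖ ≤ ‖x - y‖)
    (F : EuclideanSpace ℝ (Fin m) → ℝ)
    (hFdiff : ∀ θ ∈ Θ, DifferentiableAt ℝ F θ)
    (L : ℝ) (hL : 0 < L)
    (hlip : ∀ θ ∈ Θ, ∀ θ' ∈ Θ, ‖gradient F θ - gradient F θ'‖ ≤ L * ‖θ - θ'‖)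
    (Fstar : ℝ) (hFstar : Fstar = sInf (F '' Θ))
    (α : ℝ) (hα0 : 0 < α) (hα : α ≤ 1 / L)
    (hhat : ℕ → EuclideanSpace ℝ (Fin m))
    (θ : ℕ → EuclideanSpace ℝ (Fin m))
    (hθ0 : θ 0 ∈ Θ)
    (hθrec : ∀ t, θ (t + 1) = P (θ t - α • hhat t))
    (e : ℕ → EuclideanSpace ℝ (Fin m))
    (he : ∀ t, e t = hhat t - gradient F (θ t))
    (G : ℕ → EuclideanSpace ℝ (Fin m))
    (hG : ∀ t, G t = α⁻¹ • (θ t - P (θ t - α • gradient F (θ t)))) :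
    ∀ T : ℕ, 1 ≤ T →
      (1 / (T : ℝ)) * ∑ t ∈ Finset.range T, ‖G t‖ ^ 2 ≤
        8 * (F (θ 0) - Fstar) / (α * (T : ℝ)) +
          (10 / (T : ℝ)) * ∑ t ∈ Finset.range T, ‖e t‖ ^ 2 := by
  intro T hT
  have hmem : ∀ t, θ t ∈ Θ := by
    intro t
    cases t with
    | zero => exact hθ0
    | succ t => rw [hθrec]; exact (hP _).1
  have hstep : ∀ t, ‖G t‖ ^ 2 ≤ 8 / α * (F (θ t) - F (θ (t + 1))) + 10 * ‖e t‖ ^ 2 := by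
    intro t
    have hdesc := aux_descent hΘconv hFdiff hlip (hmem t) (hmem (t + 1))
    have hvar := aux_var hΘconv (hP (θ t - α • hhat t)).1 (hP (θ t - α • hhat t)).2 (hmem t)
    have hne := aux_nonexp hΘconv (hP (θ t - α • hhat t)).1
      (hP (θ t - α • gradient F (θ t))).1 (hP (θ t - α • hhat t)).2
      (hP (θ t - α • gradient F (θ t))).2
    rw [← hθrec] at hvar hne
    have hαG : α • G t = θ t - P (θ t - α • gradient F (θ t)) := by
      rw [hG, smul_inv_smul₀ hα0.ne']
    have e1 : θ t - α • hhat t - (θ t - α • gradient F (θ t)) = - (α • e t) := by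
      rw [he, smul_sub]; abel
    rw [e1, norm_neg, norm_smul, Real.norm_of_nonneg hα0.le] at hne
    set d := θ (t + 1) - θ t with hd
    have e2 : α • G t = (θ (t + 1) - P (θ t - α • gradient F (θ t))) - d := by
      rw [hαG, hd]; abel
    have hGn : α * ‖G t‖ ≤ α * ‖e t‖ + ‖d‖ := by
      rw [← Real.norm_of_nonneg hα0.le, ← norm_smul, e2, Real.norm_of_nonneg hα0.le]
      exact (norm_sub_le _ _).trans (by linarith)
    have e3 : inner ℝ (θ t - α • hhat t - θ (t + 1)) (θ t - θ (t + 1)) =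
        ‖d‖ ^ 2 + α * (inner ℝ (gradient F (θ t)) d + inner ℝ (e t) d) := by
      have a1 : θ t - α • hhat t - θ (t + 1) = -(d + α • (gradient F (θ t) + e t)) := by
        rw [he, hd, add_sub_cancel]; abel
      have a2 : θ t - θ (t + 1) = - d := by rw [hd]; abel
      rw [a1, a2, inner_neg_neg, inner_add_left, real_inner_smul_left, inner_add_left,
        real_inner_self_eq_norm_sq]
    rw [e3] at hvar
    have hcs : -(‖e t‖ * ‖d‖) ≤ inner ℝ (e t) d :=
      (abs_le.1 (abs_real_inner_le_norm (e t) d)).1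
    have hαL : α * L ≤ 1 := by rwa [le_div_iff₀ hL] at hα
    have k1 := mul_le_mul_of_nonneg_left hdesc hα0.le
    have k2 := mul_le_mul_of_nonneg_right hαL (sq_nonneg ‖d‖)
    have k3 := mul_le_mul_of_nonneg_left hcs hα0.le
    have k4 : ‖d‖ ^ 2 ≤ 4 * α * (F (θ t) - F (θ (t + 1))) + 4 * (α * ‖e t‖) ^ 2 := by
      nlinarith [sq_nonneg (‖d‖ - 2 * (α * ‖e t‖))]
    have k5 : (α * ‖G t‖) ^ 2 ≤ 2 * ‖d‖ ^ 2 + 2 * (α * ‖e t‖) ^ 2 := by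
      have := pow_le_pow_left₀ (by positivity) hGn 2
      nlinarith [sq_nonneg (‖d‖ - α * ‖e t‖)]
    have k6 : α ^ 2 * ‖G t‖ ^ 2 ≤
        α ^ 2 * (8 / α * (F (θ t) - F (θ (t + 1))) + 10 * ‖e t‖ ^ 2) := by
      have : α ^ 2 * (8 / α * (F (θ t) - F (θ (t + 1))) + 10 * ‖e t‖ ^ 2) =
          8 * α * (F (θ t) - F (θ (t + 1))) + 10 * (α * ‖e t‖) ^ 2 := by
        field_simp
      rw [this]
      nlinarith
    exact le_of_mul_le_mul_left k6 (by positivity)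
  have hsum := Finset.sum_le_sum fun t (_ : t ∈ Finset.range T) => hstep t
  rw [Finset.sum_add_distrib, ← Finset.mul_sum, ← Finset.mul_sum,
    Finset.sum_range_sub'] at hsum
  have hFs : Fstar ≤ F (θ T) := by
    rw [hFstar]
    refine csInf_le ?_ ⟨_, hmem T, rfl⟩
    exact (hΘcpt.image_of_continuousOn
      fun x hx => (hFdiff x hx).continuousAt.continuousWithinAt).bddBelow
  have hT0 : (0 : ℝ) < T := by exact_mod_cast hT
  have h8 : 8 / α * (F (θ 0) - F (θ T)) ≤ 8 / α * (F (θ 0) - Fstar) := by gcongr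
  calc _ ≤ (1 / (T : ℝ)) * (8 / α * (F (θ 0) - Fstar) +
        10 * ∑ t ∈ Finset.range T, ‖e t‖ ^ 2) := by gcongr; linarith
    _ = _ := by field_simp
end

section
/- No σ-uniform Polyak–Łojasiewicz constant for the penalized objective: Let f, g : ℝ^d → ℝ be differentiable, let U ⊆ ℝ^d be a set, let σ > 0, and set h_σ := g + σ f (so ∇h_σ = ∇g + σ∇f). Suppose x⋆, x̄ ∈ U satisfy ∇g(x̄) = 0, g(x̄) = g(x⋆), and f(x̄) > f(x⋆). If h_σ satisfies on U a Polyak–Łojasiewicz inequality with constant μ_σ > 0, namely h_σ(x) − inf_{y∈U} h_σ(y) ≤ (2 μ_σ)^{-1} ‖∇h_σ(x)‖² for all x ∈ U, where the infimum is finite, then μ_σ ≤ (σ/2) · ‖∇f(x̄)‖² / (f(x̄) − f(x⋆)). In particular μ_σ = O(σ) as σ ↓ 0, so no PL constant bounded away from 0 can hold uniformly over σ ∈ (0, σ₀] on any set U containing both x⋆ and x̄. -/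
/-- **No σ-uniform Polyak–Łojasiewicz constant for the penalized objective.**
Let `f, g : ℝ^d → ℝ` be differentiable, `U ⊆ ℝ^d`, `σ > 0`, and consider
`h_σ = g + σ f`. If `xstar, xbar ∈ U` satisfy `∇g xbar = 0`, `g xbar = g xstar` and
`f xbar > f xstar`, and `h_σ` satisfies a PL inequality on `U` with constant `μ > 0`
(with finite infimum), then `μ ≤ (σ/2) ‖∇f xbar‖² / (f xbar - f xstar)`. -/
theorem no_sigma_uniform_PL
    {d : ℕ}
    (f g : EuclideanSpace ℝ (Fin d) → ℝ)
    (hf : Differentiable ℝ f) (hg : Differentiable ℝ g)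
    (U : Set (EuclideanSpace ℝ (Fin d)))
    (σ : ℝ) (hσ : 0 < σ)
    (xstar xbar : EuclideanSpace ℝ (Fin d))
    (hxstar : xstar ∈ U) (hxbar : xbar ∈ U)
    (hgradzero : gradient g xbar = 0)
    (hgeq : g xbar = g xstar)
    (hflt : f xstar < f xbar)
    (μ : ℝ) (hμ : 0 < μ)
    (hbdd : BddBelow ((fun y => g y + σ * f y) '' U))
    (hPL : ∀ x ∈ U, (g x + σ * f x) - sInf ((fun y => g y + σ * f y) '' U) ≤
      (2 * μ)⁻¹ * ‖gradient (fun y => g y + σ * f y) x‖ ^ 2) :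
    μ ≤ σ / 2 * ‖gradient f xbar‖ ^ 2 / (f xbar - f xstar) := by
  have hgrad : gradient (fun y => g y + σ * f y) xbar = σ • gradient f xbar := by
    have h1 := (hg xbar).hasFDerivAt
    have h2 := ((hf xbar).hasFDerivAt).const_mul σ
    have h3 : fderiv ℝ (fun y => g y + σ * f y) xbar
        = fderiv ℝ g xbar + σ • fderiv ℝ f xbar := (h1.add h2).fderiv
    have h4 : (InnerProductSpace.toDual ℝ (EuclideanSpace ℝ (Fin d))).symm
        (fderiv ℝ g xbar) = 0 := hgradzero
    unfold gradient
    rw [h3, map_add, h4, zero_add]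
    simp
  have hle := csInf_le hbdd (Set.mem_image_of_mem (fun y => g y + σ * f y) hxstar)
  have h := hPL xbar hxbar
  rw [hgrad, norm_smul, Real.norm_of_nonneg hσ.le] at h
  have hpos : 0 < f xbar - f xstar := sub_pos.mpr hflt
  have h5 : σ * (f xbar - f xstar) ≤ (2 * μ)⁻¹ * (σ * ‖gradient f xbar‖) ^ 2 := by
    linarith
  rw [inv_mul_eq_div, le_div_iff₀ (by positivity)] at h5
  rw [le_div_iff₀ hpos]
  have h6 : σ * (μ * (f xbar - f xstar)) ≤ σ * (σ / 2 * ‖gradient f xbar‖ ^ 2) := by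
    linarith
  exact le_of_mul_le_mul_left h6 hσ
end

section
/- Tube bounds for candidates with χ²/order-2-Rényi-controlled marginals: Let S ⊆ ℝ^d be nonempty, let λ > 0, and let μ be a Borel probability measure on ℝ^d satisfying the tube tail bound μ({x : dist(x,S) ≥ t}) ≤ C exp(−c t² / λ) for every t ≥ 0, with constants C > 0 and c > 0. Let M ≥ 1 and let X₁, …, X_M be random vectors (on a common probability space, not necessarily independent) whose laws ν₁, …, ν_M are absolutely continuous with respect to μ and satisfy ∫ (dν_i/dμ)² dμ ≤ exp(ε²) for every i, for some ε ≥ 0. Then: (i) for every t ≥ 0, P( max_{1≤i≤M} dist(X_i, S) ≥ t ) ≤ M e^{ε²/2} √C exp(−(c/2) t² / λ); (ii) there exist constants C₁ and C₂, depending only on C and c, such that E[ max_{1≤i≤M} dist(X_i, S) ] ≤ C₁ e^{ε²/2} √(λ log(1+M)) and E[ max_{1≤i≤M} dist(X_i, S)² ] ≤ C₂ e^{ε²/2} λ log(1+M). -/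
open MeasureTheory Metric

/-- Cauchy-Schwarz change of measure. -/
lemma renyi_change_of_measure {E : Type*} [MeasurableSpace E] (μ ν : Measure E)
    [IsProbabilityMeasure μ] [IsProbabilityMeasure ν] (hac : ν ≪ μ) (A : Set E)
    (hA : MeasurableSet A) (ε B : ℝ) (hB : 0 ≤ B)
    (h2 : ∫⁻ x, (ν.rnDeriv μ x) ^ 2 ∂μ ≤ ENNReal.ofReal (Real.exp (ε ^ 2)))
    (hmu : μ A ≤ ENNReal.ofReal B) :
    ν A ≤ ENNReal.ofReal (Real.exp (ε ^ 2 / 2) * Real.sqrt B) := by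
  have h1 : ν A = ∫⁻ x, ν.rnDeriv μ x * A.indicator 1 x ∂μ := by
    rw [← Measure.setLIntegral_rnDeriv hac A, ← lintegral_indicator hA]
    congr 1
    ext x
    by_cases hx : x ∈ A <;> simp [hx]
  have hcs := ENNReal.lintegral_mul_le_Lp_mul_Lq μ Real.HolderConjugate.two_two
    (f := ν.rnDeriv μ) (g := A.indicator 1) (Measure.measurable_rnDeriv ν μ).aemeasurable
    ((measurable_one.indicator hA).aemeasurable)
  have h3 : ∫⁻ x, (A.indicator (1 : E → ENNReal) x) ^ (2:ℝ) ∂μ = μ A := by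
    rw [← lintegral_indicator_one hA]
    congr 1
    ext x
    by_cases hx : x ∈ A <;> simp [hx]
  rw [h3] at hcs
  rw [h1]
  refine hcs.trans ?_
  have h4 : ∫⁻ x, (ν.rnDeriv μ x) ^ (2:ℝ) ∂μ ≤ ENNReal.ofReal (Real.exp (ε ^ 2)) := by
    simpa using h2
  calc _ ≤ (ENNReal.ofReal (Real.exp (ε ^ 2))) ^ (1/2:ℝ) * (ENNReal.ofReal B) ^ (1/2:ℝ) := by
        gcongr
    _ = _ := by
        rw [ENNReal.ofReal_rpow_of_nonneg (by positivity) (by norm_num),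
          ENNReal.ofReal_rpow_of_nonneg hB (by norm_num),
          ← ENNReal.ofReal_mul (by positivity), ← Real.sqrt_eq_rpow B, ← Real.exp_mul]
        congr 3
        ring

/-- Second moment from a subgaussian tail, cut at level `s`. -/
lemma second_moment_of_tail {Ω : Type*} [MeasurableSpace Ω] (P : Measure Ω)
    [IsProbabilityMeasure P] (Z : Ω → ℝ) (hZ : Measurable Z) (h0 : ∀ ω, 0 ≤ Z ω)
    (K b s : ℝ) (hK : 0 ≤ K) (hb : 0 < b) (hs : 0 ≤ s)
    (ht : ∀ t : ℝ, 0 ≤ t → P {ω | t ≤ Z ω} ≤ ENNReal.ofReal (K * Real.exp (-b * t ^ 2))) :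
    Integrable (fun ω => Z ω ^ 2) P ∧
      ∫ ω, Z ω ^ 2 ∂P ≤ s + K * (Real.exp (-b * s) / b) := by
  have hr : 0 ≤ s + K * (Real.exp (-b * s) / b) := by positivity
  have key : ∫⁻ ω, ENNReal.ofReal (Z ω ^ 2) ∂P
      ≤ ENNReal.ofReal (s + K * (Real.exp (-b * s) / b)) := by
    rw [lintegral_eq_lintegral_meas_le P (Filter.Eventually.of_forall fun ω => sq_nonneg _)
      (hZ.pow_const 2).aemeasurable, ← Set.Ioc_union_Ioi_eq_Ioi hs]
    refine (lintegral_union_le _ _ _).trans ?_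
    rw [ENNReal.ofReal_add hs (by positivity)]
    refine add_le_add ?_ ?_
    · calc _ ≤ ∫⁻ _ in Set.Ioc 0 s, (1 : ENNReal) := lintegral_mono fun t => prob_le_one
        _ = _ := by simp
    · have hint : IntegrableOn (fun t : ℝ => K * Real.exp (-b * t)) (Set.Ioi s) :=
        (integrableOn_exp_mul_Ioi (by linarith) s).const_mul K
      calc _ ≤ ∫⁻ t in Set.Ioi s, ENNReal.ofReal (K * Real.exp (-b * t)) := by
            refine setLIntegral_mono (by fun_prop) fun t hts => ?_
            have ht0 : 0 ≤ t := hs.trans (le_of_lt hts)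
            have := ht (Real.sqrt t) (Real.sqrt_nonneg t)
            rw [Real.sq_sqrt ht0] at this
            refine le_trans (measure_mono ?_) this
            intro ω hω
            exact Real.sqrt_le_iff.2 ⟨h0 ω, hω⟩
        _ = ENNReal.ofReal (∫ t in Set.Ioi s, K * Real.exp (-b * t)) :=
            (ofReal_integral_eq_lintegral_ofReal hint
              (Filter.Eventually.of_forall fun t => by positivity)).symm
        _ = _ := by
            rw [integral_const_mul, integral_exp_mul_Ioi (by linarith) s]
            congr 2
            rw [neg_div_neg_eq]
  have hi : Integrable (fun ω => Z ω ^ 2) P := by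
    refine ⟨(hZ.pow_const 2).aestronglyMeasurable, ?_⟩
    rw [hasFiniteIntegral_iff_ofReal (Filter.Eventually.of_forall fun ω => sq_nonneg _)]
    exact key.trans_lt ENNReal.ofReal_lt_top
  refine ⟨hi, ?_⟩
  rw [← ofReal_integral_eq_lintegral_ofReal hi
    (Filter.Eventually.of_forall fun ω => sq_nonneg _)] at key
  exact (ENNReal.ofReal_le_ofReal_iff hr).1 key

/-- **Tube bounds for candidates with order-2-Rényi-controlled marginals.**
Let `μ` be a Borel probability measure on `ℝ^d` with tube tail bound
`μ {x | dist(x,S) ≥ t} ≤ C exp (-c t² / λ)` for all `t ≥ 0`. If `X 1, …, X M` are random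
vectors whose laws are absolutely continuous with respect to `μ` and satisfy
`∫ (dν_i/dμ)² dμ ≤ exp (ε²)`, then the maximum of `dist (X i, S)` has the stated
subgaussian tail, and there are constants `C₁, C₂` depending only on `C` and `c` bounding
`E[max_i dist (X i, S)]` by `C₁ e^{ε²/2} √(λ log (1+M))` and
`E[max_i dist (X i, S)²]` by `C₂ e^{ε²/2} λ log (1+M)`. -/
theorem tube_bounds_renyi_controlled_candidates
    (C c : ℝ) (hC : 0 < C) (hc : 0 < c) :
    ∃ C₁ C₂ : ℝ,
      ∀ (d : ℕ) (S : Set (EuclideanSpace ℝ (Fin d))), S.Nonempty →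
      ∀ lam : ℝ, 0 < lam →
      ∀ μ : Measure (EuclideanSpace ℝ (Fin d)), IsProbabilityMeasure μ →
      (∀ t : ℝ, 0 ≤ t →
        μ {x | t ≤ infDist x S} ≤ ENNReal.ofReal (C * Real.exp (-c * t ^ 2 / lam))) →
      ∀ M : ℕ, 1 ≤ M →
      ∀ (Ω : Type) [MeasurableSpace Ω] (Pr : Measure Ω), IsProbabilityMeasure Pr →
      ∀ X : Fin M → Ω → EuclideanSpace ℝ (Fin d), (∀ i, Measurable (X i)) →
      ∀ ε : ℝ, 0 ≤ ε →
      (∀ i, Measure.map (X i) Pr ≪ μ) →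
      (∀ i, ∫⁻ x, ((Measure.map (X i) Pr).rnDeriv μ x) ^ 2 ∂μ ≤
        ENNReal.ofReal (Real.exp (ε ^ 2))) →
      (∀ t : ℝ, 0 ≤ t →
        Pr {ω | t ≤ ⨆ i, infDist (X i ω) S} ≤
          ENNReal.ofReal ((M : ℝ) * Real.exp (ε ^ 2 / 2) * Real.sqrt C *
            Real.exp (-(c / 2) * t ^ 2 / lam))) ∧
      (∫ ω, (⨆ i, infDist (X i ω) S) ∂Pr ≤
        C₁ * Real.exp (ε ^ 2 / 2) * Real.sqrt (lam * Real.log (1 + (M : ℝ)))) ∧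
      (∫ ω, (⨆ i, infDist (X i ω) S) ^ 2 ∂Pr ≤
        C₂ * Real.exp (ε ^ 2 / 2) * (lam * Real.log (1 + (M : ℝ)))) := by
  have hl2 : 0 < Real.log 2 := Real.log_pos (by norm_num)
  set D : ℝ := (2 / c) * (1 + Real.sqrt C / Real.log 2) with hD
  have hD0 : 0 ≤ D := by positivity
  refine ⟨(1 + D) / 2, D, ?_⟩
  intro d S hS lam hlam μ hμ htube M hM Ω _ Pr hPr X hX ε hε hac hR
  have : Nonempty (Fin M) := ⟨⟨0, hM⟩⟩
  set Z : Ω → ℝ := fun ω => ⨆ i, infDist (X i ω) S with hZdef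
  have hZm : Measurable Z := Measurable.iSup fun i => (measurable_infDist).comp (hX i)
  have hZ0 : ∀ ω, 0 ≤ Z ω := fun ω => Real.iSup_nonneg fun i => infDist_nonneg
  have htail : ∀ t : ℝ, 0 ≤ t → Pr {ω | t ≤ Z ω} ≤
      ENNReal.ofReal ((M : ℝ) * Real.exp (ε ^ 2 / 2) * Real.sqrt C *
            Real.exp (-(c / 2) * t ^ 2 / lam)) := by
    intro t ht
    have hA : MeasurableSet {x : EuclideanSpace ℝ (Fin d) | t ≤ infDist x S} :=
      measurableSet_le measurable_const measurable_infDist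
    have hsub : {ω | t ≤ Z ω} ⊆ ⋃ i, (X i) ⁻¹' {x | t ≤ infDist x S} := by
      intro ω hω
      obtain ⟨i, hi⟩ := exists_eq_ciSup_of_finite (f := fun i => infDist (X i ω) S)
      refine Set.mem_iUnion.2 ⟨i, ?_⟩
      change t ≤ infDist (X i ω) S
      have hω' : t ≤ ⨆ i, infDist (X i ω) S := hω
      rw [← hi] at hω'
      exact hω'
    have hone : ∀ i, Pr ((X i) ⁻¹' {x | t ≤ infDist x S}) ≤
        ENNReal.ofReal (Real.exp (ε ^ 2 / 2) *
          Real.sqrt (C * Real.exp (-c * t ^ 2 / lam))) := by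
      intro i
      rw [← Measure.map_apply (hX i) hA]
      have := Measure.isProbabilityMeasure_map (μ := Pr) (hX i).aemeasurable
      exact renyi_change_of_measure μ _ (hac i) _ hA ε _ (by positivity) (hR i) (htube t ht)
    calc Pr {ω | t ≤ Z ω} ≤ ∑ i, Pr ((X i) ⁻¹' {x | t ≤ infDist x S}) :=
          (measure_mono hsub).trans (measure_iUnion_fintype_le _ _)
      _ ≤ ∑ _i : Fin M, ENNReal.ofReal (Real.exp (ε ^ 2 / 2) *
          Real.sqrt (C * Real.exp (-c * t ^ 2 / lam))) := Finset.sum_le_sum fun i _ => hone i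
      _ = ENNReal.ofReal ((M : ℝ) * (Real.exp (ε ^ 2 / 2) *
          Real.sqrt (C * Real.exp (-c * t ^ 2 / lam)))) := by
          rw [ENNReal.ofReal_mul (by positivity : (0:ℝ) ≤ M)]
          simp
      _ = _ := by
          rw [Real.sqrt_mul hC.le, ← Real.exp_half]
          congr 1
          rw [show -(c / 2) * t ^ 2 / lam = -c * t ^ 2 / lam / 2 by ring]
          ring
  refine ⟨htail, ?_⟩
  set L : ℝ := Real.log (1 + (M : ℝ)) with hL
  have hM1 : (1:ℝ) ≤ M := by exact_mod_cast hM
  have hL2 : Real.log 2 ≤ L := Real.log_le_log (by norm_num) (by linarith)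
  have hL0 : 0 < L := hl2.trans_le hL2
  have he1 : 1 ≤ Real.exp (ε ^ 2 / 2) := Real.one_le_exp (by positivity)
  set e : ℝ := Real.exp (ε ^ 2 / 2) with he
  set b : ℝ := c / 2 / lam with hb
  have hb0 : 0 < b := by positivity
  obtain ⟨hint, hsec⟩ := second_moment_of_tail Pr Z hZm hZ0 ((M : ℝ) * e * Real.sqrt C) b (L / b)
    (by positivity) hb0 (by positivity) (by
      intro t ht
      rw [show -b * t ^ 2 = -(c / 2) * t ^ 2 / lam by rw [hb]; ring]
      exact htail t ht)
  have hexp : Real.exp (-b * (L / b)) = 1 / (1 + (M:ℝ)) := by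
    rw [show -b * (L / b) = -L by field_simp, Real.exp_neg, hL,
      Real.exp_log (by linarith), one_div]
  have hmain : ∫ ω, Z ω ^ 2 ∂Pr ≤ D * e * (lam * L) := by
    refine hsec.trans ?_
    rw [hexp]
    have h1 : (M:ℝ) * e * Real.sqrt C * (1 / (1 + (M:ℝ)) / b) ≤ e * Real.sqrt C / b := by
      have : (M:ℝ) / (1 + M) ≤ 1 := by
        rw [div_le_one (by linarith)]; linarith
      calc _ = (M:ℝ) / (1 + M) * (e * Real.sqrt C / b) := by ring
        _ ≤ 1 * (e * Real.sqrt C / b) := by gcongr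
        _ = _ := one_mul _
    have h2 : e * Real.sqrt C / b ≤ e * Real.sqrt C / b * (L / Real.log 2) :=
      le_mul_of_one_le_right (by positivity) ((one_le_div hl2).2 hL2)
    have h3 : L / b ≤ e * (L / b) := le_mul_of_one_le_left (by positivity) he1
    have h4 : D * e * (lam * L) = e * (L / b) + e * Real.sqrt C / b * (L / Real.log 2) := by
      rw [hD, hb]; field_simp
    linarith
  refine ⟨?_, hmain⟩
  set r : ℝ := Real.sqrt (lam * L) with hr
  have hr0 : 0 < r := Real.sqrt_pos.2 (by positivity)
  have hrr : r ^ 2 = lam * L := Real.sq_sqrt (by positivity)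
  have hZle : ∫ ω, Z ω ∂Pr ≤ ∫ ω, (r / 2 + Z ω ^ 2 * (1 / (2 * r))) ∂Pr := by
    refine integral_mono_of_nonneg (Filter.Eventually.of_forall hZ0)
      ((integrable_const _).add (hint.mul_const _)) (Filter.Eventually.of_forall fun ω => ?_)
    have : r / 2 + Z ω ^ 2 * (1 / (2 * r)) - Z ω = (Z ω - r) ^ 2 / (2 * r) := by
      field_simp; ring
    have h5 : 0 ≤ (Z ω - r) ^ 2 / (2 * r) := by positivity
    show Z ω ≤ r / 2 + Z ω ^ 2 * (1 / (2 * r))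
    linarith
  refine hZle.trans ?_
  rw [integral_add (integrable_const _) (hint.mul_const _), integral_mul_const]
  simp only [integral_const, probReal_univ, one_smul]
  have h6 : (∫ ω, Z ω ^ 2 ∂Pr) * (1 / (2 * r)) ≤ D * e * r ^ 2 * (1 / (2 * r)) := by
    rw [hrr]; gcongr
  have h7 : D * e * r ^ 2 * (1 / (2 * r)) = D * e * r / 2 := by field_simp
  have h8 : r ≤ e * r := le_mul_of_one_le_left hr0.le he1
  linarith
end

section
/- Non-differentiability of the hyper-objective in the kink counterexample: Define a : ℝ → ℝ by a(θ) = exp(−1/θ²)·sin(10/θ) for θ ≠ 0 and a(0) = 0, and define F : ℝ → ℝ by F(θ) = −√(1+θ²)·|a(θ)|. Then for every nonzero integer k, the function F is not differentiable at θ_k := 10/(kπ). (In particular F has countably infinitely many points of non-differentiability accumulating at 0.) -/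
/-- The flat oscillating function `a(θ) = exp(-1/θ²)·sin(10/θ)` (with `a(0) = 0`). -/
noncomputable def aFun (θ : ℝ) : ℝ :=
  if θ = 0 then 0 else Real.exp (-1 / θ ^ 2) * Real.sin (10 / θ)

/-- The hyper-objective `F(θ) = -√(1+θ²)·|a(θ)|` from the kink counterexample. -/
noncomputable def Fhyper (θ : ℝ) : ℝ := -(Real.sqrt (1 + θ ^ 2) * |aFun θ|)

/-- **Non-differentiability of the hyper-objective in the kink counterexample.**
For every nonzero integer `k`, the function `F(θ) = -√(1+θ²)·|a(θ)|` is not differentiable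
at `θ_k = 10 / (k π)`. -/
theorem hyperobjective_not_differentiable_at_kinks (k : ℤ) (hk : k ≠ 0) :
    ¬ DifferentiableAt ℝ Fhyper (10 / ((k : ℝ) * Real.pi)) := by
  intro hd
  have hpi := Real.pi_pos.ne'
  have hk' : (k : ℝ) ≠ 0 := by exact_mod_cast hk
  set x : ℝ := 10 / ((k : ℝ) * Real.pi) with hx
  have hx0 : x ≠ 0 := by rw [hx]; positivity
  have hinv : 10 / x = k * Real.pi := by rw [hx]; field_simp
  have hsin : Real.sin (10 / x) = 0 := by rw [hinv]; exact Real.sin_int_mul_pi k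
  have hcos : Real.cos (10 / x) ≠ 0 := by
    intro h
    have := Real.sin_sq_add_cos_sq (10 / x)
    rw [hsin, h] at this
    norm_num at this
  have hFx : Fhyper x = 0 := by simp [Fhyper, aFun, hx0, hsin]
  have hmax : IsLocalMax Fhyper x := by
    refine Filter.Eventually.of_forall fun y => ?_
    rw [hFx]
    unfold Fhyper
    have : 0 ≤ Real.sqrt (1 + y ^ 2) * |aFun y| := by positivity
    linarith
  have hF0 : HasDerivAt Fhyper 0 x := by
    have := hd.hasDerivAt
    rwa [hmax.deriv_eq_zero] at this
  -- the signed version of `F` has derivative zero as well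
  have hG0 : HasDerivAt (fun y => Real.sqrt (1 + y ^ 2) * aFun y) 0 x := by
    rw [hasDerivAt_iff_isLittleO] at hF0 ⊢
    have hax : aFun x = 0 := by simp [aFun, hsin]
    simp only [hFx, hax, smul_zero, sub_zero, mul_zero] at hF0 ⊢
    rw [← Asymptotics.isLittleO_norm_left] at hF0 ⊢
    refine hF0.congr_left fun y => ?_
    simp [Fhyper, abs_mul]
  have hP : DifferentiableAt ℝ (fun y : ℝ => Real.sqrt (1 + y ^ 2) * Real.exp (-1 / y ^ 2)) x := by
    have h1 : DifferentiableAt ℝ (fun y : ℝ => Real.sqrt (1 + y ^ 2)) x :=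
      DifferentiableAt.sqrt (by fun_prop) (by positivity)
    have h2 : DifferentiableAt ℝ (fun y : ℝ => Real.exp (-1 / y ^ 2)) x :=
      DifferentiableAt.exp (DifferentiableAt.div (by fun_prop) (by fun_prop) (by positivity))
    exact h1.mul h2
  have hS : HasDerivAt (fun y : ℝ => Real.sin (10 / y)) (Real.cos (10 / x) * (10 * (-(x ^ 2)⁻¹))) x := by
    have := ((hasDerivAt_inv hx0).const_mul (10 : ℝ)).sin
    simpa only [div_eq_mul_inv] using this
  have hH := hP.hasDerivAt.mul hS
  have hH' := hH.congr_of_eventuallyEq (f₁ := fun y => Real.sqrt (1 + y ^ 2) * aFun y) (by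
    filter_upwards [isOpen_ne.mem_nhds hx0] with y hy
    have hy' : y ≠ 0 := hy
    simp [aFun, hy', mul_assoc])
  have he := hG0.unique hH'
  rw [hsin, mul_zero, zero_add] at he
  have hne : Real.sqrt (1 + x ^ 2) * Real.exp (-1 / x ^ 2) *
      (Real.cos (10 / x) * (10 * (-(x ^ 2)⁻¹))) ≠ 0 := by
    have h1 : Real.sqrt (1 + x ^ 2) ≠ 0 := by positivity
    have h2 : (-(x ^ 2)⁻¹) ≠ 0 := neg_ne_zero.mpr (by positivity)
    exact mul_ne_zero (mul_ne_zero h1 (Real.exp_ne_zero _))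
      (mul_ne_zero hcos (mul_ne_zero (by norm_num) h2))
  exact hne he.symm
end

section
/- Unique minimizer formula for the degenerate scalar problem (from the Hölder-failure counterexample): Define η : ℝ → ℝ by η(s) = sign(s)·exp(−1/s²) for s ≠ 0 and η(0) = 0, and define φ(t) = ∫₀^t η(s) ds. Then for every real b with 0 < |b| ≤ 1/4 and every r ≥ 1, the function t ↦ φ(t) + b·t restricted to the interval [−r, r] attains its minimum at the unique point t⋆ = −sign(b)·(log(1/|b|))^{−1/2}; that is, |t⋆| < 1 ≤ r and φ(t⋆) + b·t⋆ < φ(t) + b·t for every t ∈ [−r, r] with t ≠ t⋆. -/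
/-- `η(s) = sign(s)·exp(-1/s²)` (which vanishes at `s = 0`). -/
noncomputable def etaFun (s : ℝ) : ℝ := Real.sign s * Real.exp (-1 / s ^ 2)

/-- `φ(t) = ∫₀ᵗ η(s) ds`. -/
noncomputable def phiFun (t : ℝ) : ℝ := ∫ s in (0 : ℝ)..t, etaFun s

theorem etaFun_neg (s : ℝ) : etaFun (-s) = -etaFun s := by
  unfold etaFun
  rw [Real.sign_neg, neg_sq]
  ring

theorem etaFun_pos_of {s : ℝ} (h : 0 < s) : etaFun s = Real.exp (-1 / s ^ 2) := by
  unfold etaFun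
  rw [Real.sign_of_pos h, one_mul]

theorem etaFun_zero : etaFun 0 = 0 := by
  simp [etaFun]

theorem etaFun_lt_pos {x y : ℝ} (hx : 0 ≤ x) (h : x < y) : etaFun x < etaFun y := by
  have hy : 0 < y := lt_of_le_of_lt hx h
  rcases hx.eq_or_lt with h0 | h0
  · rw [← h0, etaFun_zero, etaFun_pos_of hy]
    exact Real.exp_pos _
  · rw [etaFun_pos_of h0, etaFun_pos_of hy]
    apply Real.exp_lt_exp.2
    rw [neg_div, neg_div]
    apply neg_lt_neg
    apply one_div_lt_one_div_of_lt (by positivity)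
    gcongr

theorem etaFun_strictMono : StrictMono etaFun := by
  intro x y h
  rcases le_or_gt 0 x with hx | hx
  · exact etaFun_lt_pos hx h
  · rcases le_or_gt y 0 with hy | hy
    · have := etaFun_lt_pos (x := -y) (y := -x) (by linarith) (by linarith)
      rw [etaFun_neg, etaFun_neg] at this
      linarith
    · have h1 := etaFun_lt_pos (x := 0) (y := -x) le_rfl (by linarith)
      have h2 := etaFun_lt_pos le_rfl hy
      rw [etaFun_neg] at h1
      rw [etaFun_zero] at h1 h2
      linarith

theorem etaFun_ii (x y : ℝ) : IntervalIntegrable etaFun MeasureTheory.volume x y :=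
  etaFun_strictMono.monotone.intervalIntegrable

theorem phiFun_lt (T t : ℝ) (h : t ≠ T) :
    phiFun T + (-etaFun T) * T < phiFun t + (-etaFun T) * t := by
  have key : phiFun t - phiFun T = ∫ s in T..t, etaFun s :=
    intervalIntegral.integral_interval_sub_left (etaFun_ii _ _) (etaFun_ii _ _)
  rcases lt_or_gt_of_ne h with h | h
  · have := intervalIntegral.intervalIntegral_pos_of_pos_on
      (f := fun s => etaFun T - etaFun s) (a := t) (b := T)
      (intervalIntegrable_const.sub (etaFun_ii _ _))
      (fun x hx => sub_pos.2 (etaFun_strictMono hx.2)) h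
    rw [intervalIntegral.integral_sub intervalIntegrable_const (etaFun_ii _ _),
      intervalIntegral.integral_const, smul_eq_mul] at this
    rw [intervalIntegral.integral_symm] at key
    linarith
  · have := intervalIntegral.intervalIntegral_pos_of_pos_on
      (f := fun s => etaFun s - etaFun T) (a := T) (b := t)
      ((etaFun_ii _ _).sub intervalIntegrable_const)
      (fun x hx => sub_pos.2 (etaFun_strictMono hx.1)) h
    rw [intervalIntegral.integral_sub (etaFun_ii _ _) intervalIntegrable_const,
      intervalIntegral.integral_const, smul_eq_mul] at this
    linarith

/-- **Unique minimizer formula for the degenerate scalar problem.**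
For every real `b` with `0 < |b| ≤ 1/4` and every `r ≥ 1`, the function `t ↦ φ(t) + b t`
restricted to `[-r, r]` attains its minimum at the unique point
`t⋆ = -sign(b)·(log(1/|b|))^{-1/2}`: one has `|t⋆| < 1 ≤ r` and
`φ(t⋆) + b t⋆ < φ(t) + b t` for every `t ∈ [-r, r]` with `t ≠ t⋆`. -/
theorem degenerate_scalar_unique_minimizer (b r : ℝ) (hb0 : b ≠ 0) (hb : |b| ≤ 1 / 4)
    (hr : 1 ≤ r) :
    |(-(Real.sign b) * Real.log (1 / |b|) ^ (-(1 : ℝ) / 2))| < 1 ∧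
    ∀ t ∈ Set.Icc (-r) r, t ≠ -(Real.sign b) * Real.log (1 / |b|) ^ (-(1 : ℝ) / 2) →
      phiFun (-(Real.sign b) * Real.log (1 / |b|) ^ (-(1 : ℝ) / 2)) +
          b * (-(Real.sign b) * Real.log (1 / |b|) ^ (-(1 : ℝ) / 2)) <
        phiFun t + b * t := by
  have hbp : 0 < |b| := abs_pos.2 hb0
  have hL : 1 < Real.log (1 / |b|) := by
    rw [Real.lt_log_iff_exp_lt (by positivity)]
    have h4 : 4 ≤ 1 / |b| := by
      rw [le_div_iff₀ hbp]
      linarith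
    linarith [Real.exp_one_lt_d9]
  have hexp : Real.exp (-Real.log (1 / |b|)) = |b| := by
    rw [one_div, Real.log_inv, neg_neg, Real.exp_log hbp]
  set L := Real.log (1 / |b|) with hLdef
  have hL0 : 0 < L := by linarith
  have hu : 0 < L ^ (-(1 : ℝ) / 2) := Real.rpow_pos_of_pos hL0 _
  have hu1 : L ^ (-(1 : ℝ) / 2) < 1 := Real.rpow_lt_one_of_one_lt_of_neg hL (by norm_num)
  have hu2 : (L ^ (-(1 : ℝ) / 2)) ^ 2 = L⁻¹ := by
    rw [← Real.rpow_natCast, ← Real.rpow_mul hL0.le, ← Real.rpow_neg_one]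
    norm_num
  set u := L ^ (-(1 : ℝ) / 2) with hudef
  have heu : etaFun u = |b| := by
    rw [etaFun_pos_of hu, hu2, div_inv_eq_mul, neg_one_mul, hexp]
  have hT : |(-(Real.sign b) * u)| < 1 ∧ b = -etaFun (-(Real.sign b) * u) := by
    rcases lt_or_gt_of_ne hb0 with h | h
    · rw [Real.sign_of_neg h, neg_neg, one_mul, heu, abs_of_pos hu, abs_of_neg h, neg_neg]
      exact ⟨hu1, rfl⟩
    · rw [Real.sign_of_pos h, neg_one_mul, etaFun_neg, heu, abs_neg, abs_of_pos hu,
        abs_of_pos h, neg_neg]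
      exact ⟨hu1, rfl⟩
  refine ⟨hT.1, fun t _ ht => ?_⟩
  have := phiFun_lt _ t ht
  rwa [← hT.2] at this
end

section
/- Upper bound on the Gibbs normalizing constant under quadratic growth: Let D > 0 and μ > 0, let S ⊆ ℝ^d be a nonempty set contained in the closed Euclidean ball of radius D centered at the origin, let g : ℝ^d → ℝ be Borel measurable, and let g⋆ ∈ ℝ satisfy g(x) ≥ g⋆ and the quadratic growth condition g(x) − g⋆ ≥ (μ/2)·dist(x, S)² for all x ∈ ℝ^d. Then there is a finite constant C_Z, depending only on μ, D, and d, such that for every λ with 0 < λ ≤ 1, ∫_{ℝ^d} exp(−g(x)/λ) dx ≤ C_Z · exp(−g⋆/λ). -/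
open MeasureTheory Metric

/-- **Upper bound on the Gibbs normalizing constant under quadratic growth.**
For every dimension `d` and constants `D > 0`, `μ > 0`, there is a finite constant `C_Z`
(depending only on `μ`, `D`, `d`) such that: for every nonempty set `S` contained in the
closed ball of radius `D` about the origin, every Borel measurable `g : ℝ^d → ℝ` and
`gstar ∈ ℝ` with `g ≥ gstar` and `g x - gstar ≥ (μ/2)·dist(x,S)²` for all `x`, and every
`0 < λ ≤ 1`, one has `∫ exp (-g x / λ) dx ≤ C_Z · exp (-gstar / λ)`. -/
theorem gibbs_normalizing_constant_bound (d : ℕ) (D μ : ℝ) (hD : 0 < D) (hμ : 0 < μ) :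
    ∃ CZ : ℝ,
      ∀ S : Set (EuclideanSpace ℝ (Fin d)), S.Nonempty →
        S ⊆ Metric.closedBall 0 D →
      ∀ g : EuclideanSpace ℝ (Fin d) → ℝ, Measurable g →
      ∀ gstar : ℝ, (∀ x, gstar ≤ g x) →
      (∀ x, μ / 2 * infDist x S ^ 2 ≤ g x - gstar) →
      ∀ lam : ℝ, 0 < lam → lam ≤ 1 →
        ∫ x, Real.exp (-g x / lam) ≤ CZ * Real.exp (-gstar / lam) := by
  refine ⟨∫ x : EuclideanSpace ℝ (Fin d),
    Real.exp (μ / 2 * D ^ 2) * Real.exp (-(μ / 4) * ‖x‖ ^ 2), ?_⟩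
  intro S hS hSD g _ gstar hg hq lam hl hl1
  have hint : Integrable (fun x : EuclideanSpace ℝ (Fin d) =>
      Real.exp (-(μ / 4) * ‖x‖ ^ 2)) := by
    have h := (GaussianFourier.integrable_cexp_neg_mul_sq_norm_add
      (V := EuclideanSpace ℝ (Fin d)) (b := ((μ / 4 : ℝ) : ℂ))
      (by rw [Complex.ofReal_re]; positivity) 0 0).norm
    refine h.congr (Filter.Eventually.of_forall fun x => ?_)
    have e : (-((μ / 4 : ℝ) : ℂ) * (‖x‖ : ℂ) ^ 2 +
        0 * ((inner ℝ (0 : EuclideanSpace ℝ (Fin d)) x : ℝ) : ℂ))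
        = ((-(μ / 4) * ‖x‖ ^ 2 : ℝ) : ℂ) := by
      push_cast
      ring
    simp only [Complex.norm_exp]
    rw [e, Complex.ofReal_re]
  rw [← integral_mul_const]
  refine integral_mono_of_nonneg (Filter.Eventually.of_forall fun x => (Real.exp_pos _).le)
    ((hint.const_mul _).mul_const _) (Filter.Eventually.of_forall fun x => ?_)
  simp only
  rw [← Real.exp_add, ← Real.exp_add]
  apply Real.exp_le_exp.mpr
  have h1 : ‖x‖ - D ≤ infDist x S := by
    rw [le_infDist hS]
    intro y hy
    have hy' := hSD hy
    rw [mem_closedBall_zero_iff] at hy'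
    have := norm_sub_norm_le x y
    rw [dist_eq_norm]
    linarith
  have h0 : 0 ≤ infDist x S := infDist_nonneg
  have h2 : ‖x‖ ^ 2 ≤ 2 * infDist x S ^ 2 + 2 * D ^ 2 := by
    have : ‖x‖ ^ 2 ≤ (infDist x S + D) ^ 2 :=
      pow_le_pow_left₀ (norm_nonneg x) (by linarith) 2
    nlinarith [sq_nonneg (infDist x S - D)]
  have h3 : g x - gstar ≤ (g x - gstar) / lam :=
    le_div_self (sub_nonneg.mpr (hg x)) hl hl1
  have h4 : -g x / lam = -gstar / lam - (g x - gstar) / lam := by ring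
  have h5 := hq x
  have h6 := mul_le_mul_of_nonneg_left h2 (by positivity : 0 ≤ μ / 4)
  rw [h4]
  linarith
end

section
/- Gaussian cubic-integral bound against a smooth potential (key estimate for the warm-start Rényi bound): Let g : ℝ^d → ℝ be differentiable with L-Lipschitz gradient for some L > 0, fix τ with 0 < τ < 3/(2L), and set a := 3/(2τ) − L > 0. For z ∈ ℝ^d and λ > 0, let p(x) := (2πτλ)^{−d/2}·exp(−‖x − z‖² / (2τλ)) be the density of the Gaussian measure N(z, τλ·I_d). Then ∫_{ℝ^d} p(x)³ · exp(2 g(x)/λ) dx ≤ (2πτ)^{−3d/2} · (π/a)^{d/2} · λ^{−d} · exp( 2 g(z)/λ + ‖∇g(z)‖² / (a λ) ). -/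
open MeasureTheory


theorem descent_aux {d : ℕ} (g : EuclideanSpace ℝ (Fin d) → ℝ) (L : ℝ)
    (hg : Differentiable ℝ g)
    (hlip : ∀ x y : EuclideanSpace ℝ (Fin d),
      ‖gradient g x - gradient g y‖ ≤ L * ‖x - y‖)
    (z u : EuclideanSpace ℝ (Fin d)) :
    g (z + u) ≤ g z + inner ℝ (gradient g z) u + L / 2 * ‖u‖ ^ 2 := by
  let f : ℝ → ℝ := fun t =>
    g (z + t • u) - t * inner ℝ (gradient g z) u - L / 2 * ‖u‖ ^ 2 * t ^ 2
  have hd : ∀ t, HasDerivAt f (inner ℝ (gradient g (z + t • u)) u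
      - inner ℝ (gradient g z) u - L * ‖u‖ ^ 2 * t) t := by
    intro t
    have h1 : HasDerivAt (fun t : ℝ => z + t • u) u t := by
      simpa using ((hasDerivAt_id t).smul_const u).const_add z
    have h2 := ((hg (z + t • u)).hasGradientAt.hasFDerivAt).comp_hasDerivAt t h1
    have h3 := (h2.sub ((hasDerivAt_id t).mul_const (inner ℝ (gradient g z) u))).sub
      (((hasDerivAt_id t).pow 2).const_mul (L / 2 * ‖u‖ ^ 2))
    refine h3.congr_deriv ?_
    simp
    ring
  have hanti : AntitoneOn f (Set.Icc 0 1) := by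
    refine antitoneOn_of_deriv_nonpos (convex_Icc 0 1)
      (fun t _ => (hd t).continuousAt.continuousWithinAt)
      (fun t _ => (hd t).differentiableAt.differentiableWithinAt) ?_
    intro t ht
    rw [interior_Icc] at ht
    rw [(hd t).deriv, ← inner_sub_left]
    have h1 := real_inner_le_norm (gradient g (z + t • u) - gradient g z) u
    have h2 := hlip (z + t • u) z
    rw [add_sub_cancel_left, norm_smul, Real.norm_of_nonneg ht.1.le] at h2
    have h3 := mul_le_mul_of_nonneg_right h2 (norm_nonneg u)
    nlinarith
  have := hanti (Set.left_mem_Icc.2 zero_le_one) (Set.right_mem_Icc.2 zero_le_one) zero_le_one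
  simp only [f, zero_smul, one_smul, add_zero] at this
  linarith

/-- **Gaussian cubic-integral bound against a smooth potential.**
Let `g : ℝ^d → ℝ` be differentiable with `L`-Lipschitz gradient, fix `0 < τ < 3/(2L)`
(so `a := 3/(2τ) - L > 0`), and let `p` be the density of the Gaussian `N(z, τ λ I_d)`.
Then `∫ p(x)³ exp (2 g(x)/λ) dx` is bounded by
`(2πτ)^{-3d/2} (π/a)^{d/2} λ^{-d} exp (2 g(z)/λ + ‖∇g(z)‖²/(a λ))`. -/
theorem gaussian_cubic_integral_bound
    {d : ℕ}
    (g : EuclideanSpace ℝ (Fin d) → ℝ)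
    (L : ℝ) (hL : 0 < L)
    (hg : Differentiable ℝ g)
    (hlip : ∀ x y : EuclideanSpace ℝ (Fin d),
      ‖gradient g x - gradient g y‖ ≤ L * ‖x - y‖)
    (τ : ℝ) (hτ0 : 0 < τ) (hτ : τ < 3 / (2 * L))
    (z : EuclideanSpace ℝ (Fin d))
    (lam : ℝ) (hlam : 0 < lam) :
    ∫ x, ((2 * Real.pi * τ * lam) ^ (-(d : ℝ) / 2) *
          Real.exp (-‖x - z‖ ^ 2 / (2 * τ * lam))) ^ 3 *
        Real.exp (2 * g x / lam) ≤
      (2 * Real.pi * τ) ^ (-(3 * (d : ℝ)) / 2) *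
        (Real.pi / (3 / (2 * τ) - L)) ^ ((d : ℝ) / 2) * lam ^ (-(d : ℝ)) *
        Real.exp (2 * g z / lam + ‖gradient g z‖ ^ 2 / ((3 / (2 * τ) - L) * lam)) := by
  have ha : 0 < 3 / (2 * τ) - L := by
    rw [lt_div_iff₀ (by positivity)] at hτ
    rw [sub_pos, lt_div_iff₀ (by positivity)]
    linarith
  have haeq : 3 / (2 * τ) = (3 / (2 * τ) - L) + L := by ring
  set a := 3 / (2 * τ) - L with hadef
  clear_value a
  have hπ := Real.pi_pos
  set w := gradient g z with hw
  set C := ((2 * Real.pi * τ * lam) ^ (-(d : ℝ) / 2)) ^ 3 with hC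
  set E := Real.exp (2 * g z / lam + ‖w‖ ^ 2 / (a * lam)) with hE
  have hb : 0 < a / lam := by positivity
  have hint : ∫ x : EuclideanSpace ℝ (Fin d), Real.exp (-(a / lam) * ‖x - (z + a⁻¹ • w)‖ ^ 2)
      = (Real.pi / (a / lam)) ^ ((d : ℝ) / 2) := by
    rw [integral_sub_right_eq_self
      (fun x : EuclideanSpace ℝ (Fin d) => Real.exp (-(a / lam) * ‖x‖ ^ 2)) (z + a⁻¹ • w)]
    rw [GaussianFourier.integral_rexp_neg_mul_sq_norm hb]
    simp
  have hI : Integrable (fun x : EuclideanSpace ℝ (Fin d) =>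
      Real.exp (-(a / lam) * ‖x - (z + a⁻¹ • w)‖ ^ 2)) := by
    refine Integrable.of_integral_ne_zero ?_
    rw [hint]
    positivity
  have key : ∀ x, ((2 * Real.pi * τ * lam) ^ (-(d : ℝ) / 2) *
          Real.exp (-‖x - z‖ ^ 2 / (2 * τ * lam))) ^ 3 *
        Real.exp (2 * g x / lam) ≤
        C * E * Real.exp (-(a / lam) * ‖x - (z + a⁻¹ • w)‖ ^ 2) := by
    intro x
    rw [mul_pow, ← hC, mul_assoc C, mul_assoc C, hE, ← Real.exp_nat_mul, ← Real.exp_add,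
      ← Real.exp_add]
    refine mul_le_mul_of_nonneg_left (Real.exp_le_exp.2 ?_) (by positivity)
    have h := descent_aux g L hg hlip z (x - z)
    rw [add_sub_cancel, ← hw] at h
    have e1 : ‖x - (z + a⁻¹ • w)‖ ^ 2
        = ‖x - z‖ ^ 2 - 2 * (a⁻¹ * inner ℝ w (x - z)) + (a⁻¹) ^ 2 * ‖w‖ ^ 2 := by
      rw [← sub_sub, norm_sub_sq_real, real_inner_smul_right, norm_smul, mul_pow,
        real_inner_comm, Real.norm_eq_abs, sq_abs]
    rw [e1]
    generalize inner ℝ w (x - z) = i at *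
    have e2 : ((3 : ℕ) : ℝ) * (-‖x - z‖ ^ 2 / (2 * τ * lam))
        = -((a + L) * ‖x - z‖ ^ 2) / lam := by
      rw [← haeq]; push_cast; field_simp
    have e3 : 2 * g z / lam + ‖w‖ ^ 2 / (a * lam)
        + -(a / lam) * (‖x - z‖ ^ 2 - 2 * (a⁻¹ * i) + (a⁻¹) ^ 2 * ‖w‖ ^ 2)
        = (2 * g z - a * ‖x - z‖ ^ 2 + 2 * i) / lam := by
      field_simp; ring
    rw [e2, e3, ← add_div]
    refine div_le_div_of_nonneg_right ?_ hlam.le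
    linarith
  calc _ ≤ ∫ x : EuclideanSpace ℝ (Fin d),
        C * E * Real.exp (-(a / lam) * ‖x - (z + a⁻¹ • w)‖ ^ 2) :=
        integral_mono_of_nonneg (Filter.Eventually.of_forall fun x => by positivity)
          (hI.const_mul _) (Filter.Eventually.of_forall key)
    _ = C * E * (Real.pi / (a / lam)) ^ ((d : ℝ) / 2) := by
        rw [integral_const_mul, hint]
    _ = _ := by
        have c1 : C = (2 * Real.pi * τ) ^ (-(3 * (d : ℝ)) / 2) * lam ^ (-(3 * (d : ℝ)) / 2) := by
          rw [hC, ← Real.rpow_natCast, ← Real.rpow_mul (by positivity),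
            ← Real.mul_rpow (by positivity) hlam.le]
          congr 1; push_cast; ring
        have c2 : (Real.pi / (a / lam)) ^ ((d : ℝ) / 2)
            = (Real.pi / a) ^ ((d : ℝ) / 2) * lam ^ ((d : ℝ) / 2) := by
          rw [← Real.mul_rpow (by positivity) hlam.le]
          congr 1; field_simp
        have c3 : lam ^ (-(d : ℝ)) = lam ^ (-(3 * (d : ℝ)) / 2) * lam ^ ((d : ℝ) / 2) := by
          rw [← Real.rpow_add hlam]
          congr 1; ring
        rw [c1, c2, c3]
        ring
end
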